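/- arXiv:2308.05277 — 3 statements merged into one kernel-verified Lean document; each statement's English description precedes it below -/
import Mathlib

section
/- Every graph G with chromatic number at least 4 contains a K_4 minor, i.e., there exist four pairwise disjoint nonempty connected subgraphs of G such that every pair of them is joined by an edge of G. -/
/-!
If a vertex set `s` is inclusion-minimal among those on which `G` has no proper 3-coloring, then
every `v ∈ s` has at least three neighbours in `s`: otherwise a coloring of `s \ {v}` extends to
`v`. It remains to find a `K₄` minor from this degree condition.

Take a path in `s` of maximum length, written `v, A, w, T` with `v` adjacent to `w` and `A`
nonempty, where the path and the chord `vw` are chosen so that `A` is as short as possible. By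
maximality all neighbours of `v` in `s` lie on the path, and by minimality of `A` none of them is
in `A` except its first vertex; so a third neighbour of `v` lies in `T`
(`exists_neighbor_tail`). If `u` is the last vertex of `A`, reversing the segment `v, A` gives
another longest path, which starts at `u`, whose chord `uw` encloses a segment of the same length.
Hence `u` has a neighbour in `T` too. Now `{v}`, `A`, `{w}`, `T` are the four branch sets.

Paths are represented as duplicate-free lists whose consecutive entries are adjacent.
-/

open SimpleGraph

def HasK4Minor {V : Type*} (G : SimpleGraph V) : Prop :=
  ∃ H : Fin 4 → G.Subgraph,
    (∀ i, (H i).verts.Nonempty) ∧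
    (∀ i, (H i).Connected) ∧
    (∀ i j, i ≠ j → Disjoint (H i).verts (H j).verts) ∧
    (∀ i j, i ≠ j → ∃ a ∈ (H i).verts, ∃ b ∈ (H j).verts, G.Adj a b)

theorem exists_walk_of_isChain {V : Type*} (G : SimpleGraph V) (a : V) (l : List V)
    (h : (a :: l).IsChain G.Adj) : ∃ (b : V) (p : G.Walk a b), p.support = a :: l := by
  induction l generalizing a with
  | nil => exact ⟨a, .nil, rfl⟩
  | cons c l ih =>
    rw [List.isChain_cons_cons] at h
    obtain ⟨b, p, hp⟩ := ih c h.2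
    exact ⟨b, .cons h.1 p, by simp [hp]⟩

theorem exists_subgraph_of_isChain {V : Type*} (G : SimpleGraph V) (l : List V) (hl : l ≠ [])
    (h : l.IsChain G.Adj) : ∃ H : G.Subgraph, H.Connected ∧ H.verts = {x | x ∈ l} := by
  cases l with
  | nil => exact absurd rfl hl
  | cons a l =>
    obtain ⟨b, p, hp⟩ := exists_walk_of_isChain G a l h
    exact ⟨p.toSubgraph, p.toSubgraph_connected, by rw [Walk.verts_toSubgraph, hp]⟩

/-- Four disjoint nonempty paths with all six adjacencies between them form a `K₄` minor. -/
theorem hasK4Minor_of_lists {V : Type*} (G : SimpleGraph V) (l : Fin 4 → List V)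
    (hne : ∀ i, l i ≠ []) (hc : ∀ i, (l i).IsChain G.Adj)
    (hd : ∀ i j, i < j → (l i).Disjoint (l j))
    (ha : ∀ i j, i < j → ∃ a ∈ l i, ∃ b ∈ l j, G.Adj a b) : HasK4Minor G := by
  choose H hH hv using fun i => exists_subgraph_of_isChain G (l i) (hne i) (hc i)
  refine ⟨H, fun i => ?_, hH, fun i j hij => ?_, fun i j hij => ?_⟩
  · rw [hv]
    exact List.exists_mem_of_ne_nil _ (hne i)
  · rw [hv, hv, Set.disjoint_left]
    rcases lt_or_gt_of_ne hij with h | h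
    · exact fun x hx hy => hd i j h hx hy
    · exact fun x hx hy => hd j i h hy hx
  · rw [hv, hv]
    rcases lt_or_gt_of_ne hij with h | h
    · exact ha i j h
    · obtain ⟨a, h1, b, h2, h3⟩ := ha j i h
      exact ⟨b, h2, a, h1, h3.symm⟩

/-- The list `l` traverses a path of `G` inside `s`. -/
def IsPathIn {V : Type*} (G : SimpleGraph V) (s : Finset V) (l : List V) : Prop :=
  l.Nodup ∧ l.IsChain G.Adj ∧ ∀ x ∈ l, x ∈ s

/-- A path `v, A, w, T` in `s` with exactly `n` vertices, where `A` is nonempty and `v` is adjacent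
to `w`. -/
def IsChordedPath {V : Type*} (G : SimpleGraph V) (s : Finset V) (n : ℕ) (v : V) (A : List V)
    (w : V) (T : List V) : Prop :=
  IsPathIn G s (v :: (A ++ w :: T)) ∧ (v :: (A ++ w :: T)).length = n ∧ A ≠ [] ∧ G.Adj v w

/-- A longest path passes through every neighbour of its initial vertex, since otherwise it could be
prolonged. -/
theorem mem_of_adj_head {V : Type*} {G : SimpleGraph V} {s : Finset V} {v c : V} {l : List V}
    (hmax : ∀ l', IsPathIn G s l' → l'.length ≤ (v :: l).length)
    (hl : IsPathIn G s (v :: l)) (hc : c ∈ s) (hvc : G.Adj v c) : c ∈ l := by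
  by_contra hcl
  have h := hmax (c :: v :: l) ⟨List.nodup_cons.2 ⟨by simp [hcl, hvc.ne'], hl.1⟩,
    List.isChain_cons_cons.2 ⟨hvc.symm, hl.2.1⟩, by
      intro x hx
      rcases List.mem_cons.1 hx with rfl | hx
      · exact hc
      · exact hl.2.2 x hx⟩
  simp at h

/-- On a longest path `v, A, w, T` whose chord `vw` is shortest possible, the initial vertex `v`
has a neighbour in `T`. -/
theorem exists_neighbor_tail {V : Type*} {G : SimpleGraph V} {s : Finset V} {n : ℕ}
    (hdeg : ∀ v ∈ s, ∀ a b, ∃ c ∈ s, G.Adj v c ∧ c ≠ a ∧ c ≠ b)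
    (hmax : ∀ l', IsPathIn G s l' → l'.length ≤ n) {v : V} {A : List V} {w : V} {T : List V}
    (h : IsChordedPath G s n v A w T)
    (hmin : ∀ v' A' w' T', IsChordedPath G s n v' A' w' T' → A.length ≤ A'.length) :
    ∃ c ∈ T, G.Adj v c := by
  obtain ⟨hP, hn, hA, hvw⟩ := h
  obtain ⟨c, hcs, hvc, hca, hcw⟩ := hdeg v (hP.2.2 v (by simp)) (A.head hA) w
  have hc := mem_of_adj_head (by rwa [hn]) hP hcs hvc
  simp only [List.mem_append, List.mem_cons, hcw, false_or] at hc
  rcases hc with hc | hc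
  · obtain ⟨A1, A2, rfl⟩ := List.append_of_mem hc
    have h1 : A1 ≠ [] := by
      rintro rfl
      simp at hca
    have := hmin v A1 c (A2 ++ w :: T) ⟨by simpa using hP, by simpa using hn, h1, hvc⟩
    simp at this
  · exact ⟨c, hc, hvc⟩

/-- A finite graph induced on a nonempty `s` with minimum degree at least three has a `K₄` minor. -/
theorem hasK4Minor_of_degree {V : Type*} [Fintype V] {G : SimpleGraph V} {s : Finset V}
    (hs : s.Nonempty) (hdeg : ∀ v ∈ s, ∀ a b, ∃ c ∈ s, G.Adj v c ∧ c ≠ a ∧ c ≠ b) :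
    HasK4Minor G := by
  classical
  obtain ⟨n, ⟨l, hl, hln⟩, hmax⟩ : ∃ n, (∃ l, IsPathIn G s l ∧ l.length = n) ∧
      ∀ l', IsPathIn G s l' → l'.length ≤ n := by
    let p : ℕ → Prop := fun n => ∃ l, IsPathIn G s l ∧ l.length = n
    have hb : ∀ l, IsPathIn G s l → l.length ≤ Fintype.card V :=
      fun l hl => hl.1.length_le_card
    have h0 : p 0 := ⟨[], ⟨by simp, by simp, by simp⟩, rfl⟩
    exact ⟨Nat.findGreatest p (Fintype.card V), Nat.findGreatest_spec (Nat.zero_le _) h0,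
      fun l hl => Nat.le_findGreatest (hb l hl) ⟨l, hl, rfl⟩⟩
  have hex : ∃ k v A w T, IsChordedPath G s n v A w T ∧ A.length = k := by
    cases l with
    | nil =>
      obtain ⟨x, hx⟩ := hs
      have := hmax [x] ⟨by simp, by simp, by simpa using hx⟩
      simp at this hln
      omega
    | cons v t =>
      obtain ⟨c, hcs, hvc, hca, -⟩ := hdeg v (hl.2.2 v (by simp)) (t.headD v) v
      have hc := mem_of_adj_head (by rwa [hln]) hl hcs hvc
      obtain ⟨A, T, rfl⟩ := List.append_of_mem hc
      refine ⟨_, v, A, c, T, ⟨hl, hln, ?_, hvc⟩, rfl⟩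
      rintro rfl
      simp at hca
  obtain ⟨v, A, w, T, h, hk⟩ := Nat.find_spec hex
  have hmin : ∀ v' A' w' T', IsChordedPath G s n v' A' w' T' → A.length ≤ A'.length :=
    fun v' A' w' T' h' => hk ▸ Nat.find_min' hex ⟨v', A', w', T', h', rfl⟩
  obtain ⟨c, hcT, hvc⟩ := exists_neighbor_tail hdeg hmax h hmin
  obtain ⟨⟨hnd, hch, hmem⟩, hn, hA, hvw⟩ := h
  obtain ⟨B, u, rfl⟩ : ∃ B u, A = B ++ [u] :=
    ⟨A.dropLast, A.getLast hA, (List.dropLast_append_getLast hA).symm⟩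
  -- Split the path just before `w`; the first part is the segment to be reversed.
  rw [← List.cons_append] at hnd hch hmem
  obtain ⟨hch1, hch2, hch3⟩ := List.isChain_append.1 hch
  have huw : G.Adj u w := hch3 u (by rw [← List.cons_append, List.getLast?_concat]; rfl) w rfl
  have hrev : u :: ((B.reverse ++ [v]) ++ w :: T) = (v :: (B ++ [u])).reverse ++ w :: T := by
    simp
  have hperm : ((v :: (B ++ [u])).reverse ++ w :: T).Perm ((v :: (B ++ [u])) ++ w :: T) :=
    (List.reverse_perm _).append_right _
  have h2 : IsChordedPath G s n u (B.reverse ++ [v]) w T := by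
    refine ⟨?_, ?_, by simp, huw⟩
    · rw [hrev]
      refine ⟨hperm.nodup_iff.2 hnd, ?_, fun x hx => hmem x (hperm.mem_iff.1 hx)⟩
      refine List.isChain_append.2 ⟨?_, hch2, ?_⟩
      · rw [List.isChain_reverse]
        exact hch1.imp fun a b hab => hab.symm
      · intro x hx y hy
        simp only [List.getLast?_reverse, List.head?_cons, Option.mem_some_iff] at hx hy
        subst hx hy
        exact hvw
    · rw [hrev, hperm.length_eq]
      exact hn
  obtain ⟨d, hdT, hud⟩ := exists_neighbor_tail hdeg hmax h2
    fun v' A' w' T' h' => by simpa using hmin v' A' w' T' h'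
  have hT : T ≠ [] := List.ne_nil_of_mem hcT
  have hwT : G.Adj w (T.head hT) := by
    cases T with
    | nil => exact absurd rfl hT
    | cons t T => exact (List.isChain_cons_cons.1 hch2).1
  have hvB : G.Adj v ((B ++ [u]).head (by simp)) := by
    cases B with
    | nil => exact (List.isChain_cons_cons.1 hch1).1
    | cons t T => exact (List.isChain_cons_cons.1 hch1).1
  have hB : (B ++ [u]).IsChain G.Adj := hch1.tail
  have hTc : T.IsChain G.Adj := hch2.tail
  have hdis := List.disjoint_of_nodup_append hnd
  refine hasK4Minor_of_lists G ![[v], B ++ [u], [w], T] ?_ ?_ ?_ ?_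
  · intro i
    fin_cases i <;> simp [hT]
  · intro i
    fin_cases i <;> simp [hB, hTc]
  · intro i j hij
    have hv := (List.nodup_append.1 hnd).1.notMem
    have hw := (List.nodup_append.1 hnd).2.1.notMem
    have hvA : ∀ x ∈ [v], x ∈ v :: (B ++ [u]) := by simp
    have hAA : ∀ x ∈ B ++ [u], x ∈ v :: (B ++ [u]) := fun x hx => List.mem_cons_of_mem _ hx
    have hww : ∀ x ∈ [w], x ∈ w :: T := by simp
    have hTT : ∀ x ∈ T, x ∈ w :: T := fun x hx => List.mem_cons_of_mem _ hx
    fin_cases i <;> fin_cases j <;> first | (simp at hij; done) | skip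
    · exact List.singleton_disjoint.2 hv
    · exact fun x hx hy => hdis (hvA x hx) (hww x hy)
    · exact fun x hx hy => hdis (hvA x hx) (hTT x hy)
    · exact fun x hx hy => hdis (hAA x hx) (hww x hy)
    · exact fun x hx hy => hdis (hAA x hx) (hTT x hy)
    · exact List.singleton_disjoint.2 hw
  · intro i j hij
    fin_cases i <;> fin_cases j <;> first | (simp at hij; done) | skip
    · exact ⟨v, by simp, _, List.head_mem _, hvB⟩
    · exact ⟨v, by simp, w, by simp, hvw⟩
    · exact ⟨v, by simp, c, hcT, hvc⟩
    · exact ⟨u, by simp, w, by simp, huw⟩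
    · exact ⟨u, by simp, d, hdT, hud⟩
    · exact ⟨w, by simp, _, List.head_mem hT, hwT⟩

theorem exists_coloring_on {V : Type*} [Fintype V] {G : SimpleGraph V} (hG : ¬ HasK4Minor G)
    (s : Finset V) : ∃ C : V → Fin 3, ∀ x ∈ s, ∀ y ∈ s, G.Adj x y → C x ≠ C y := by
  classical
  induction s using Finset.strongInduction with
  | H s ih =>
    by_contra hcol
    have hs : s.Nonempty := by
      by_contra h
      rw [Finset.not_nonempty_iff_eq_empty] at h
      exact hcol ⟨fun _ => 0, by simp [h]⟩
    refine hG (hasK4Minor_of_degree hs fun v hv a b => ?_)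
    by_contra! hN
    obtain ⟨C, hC⟩ := ih (s.erase v) (Finset.erase_ssubset hv)
    obtain ⟨k, hka, hkb⟩ : ∃ k : Fin 3, k ≠ C a ∧ k ≠ C b :=
      (by decide : ∀ p q : Fin 3, ∃ k, k ≠ p ∧ k ≠ q) (C a) (C b)
    have hk : ∀ y ∈ s, G.Adj v y → k ≠ C y := by
      intro y hy hvy
      by_cases h : y = a
      · rwa [h]
      · rwa [hN y hy hvy h]
    refine hcol ⟨Function.update C v k, fun x hx y hy hxy => ?_⟩
    by_cases hxv : x = v
    · subst hxv
      simpa [hxy.ne'] using hk y hy hxy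
    · by_cases hyv : y = v
      · subst hyv
        simpa [hxv] using (hk x hx hxy.symm).symm
      · simpa [hxv, hyv] using hC x (by simp [hxv, hx]) y (by simp [hyv, hy]) hxy

theorem stmt0 {V : Type*} [Fintype V] (G : SimpleGraph V)
    (h : 4 ≤ G.chromaticNumber) : HasK4Minor G := by
  by_contra hG
  obtain ⟨C, hC⟩ := exists_coloring_on hG Finset.univ
  have h3 : G.Colorable 3 := ⟨Coloring.mk C fun {x y} hxy => hC x (by simp) y (by simp) hxy⟩
  have := h.trans h3.chromaticNumber_le
  exact absurd this (by decide)
end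

section
/- Let H be a graph and let C2 and C3 be two cycles in H sharing an edge xy, with C2 ⊆ H − ρ₃ and C3 ⊆ H − ρ₂ for a partition ρ₁, ρ₂, ρ₃ of V(H) whose only monochromatic edge is xy (x, y ∈ ρ₁). Suppose there is a path P in H − ρ₁ from a vertex u of C2 to a vertex v of C3 whose internal vertices avoid both C2 and C3, with u ∈ ρ₂ \ V(C3) and v ∈ ρ₃ \ V(C2). Then H contains a K_4 minor. -/
/-!
The cycles `C2` and `C3` share the two vertices `x ≠ y`, `u` lies on `C2` only and `v` on `C3` only,
and the interior of `P` avoids both cycles.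

Follow `C2` from `u` in both directions until it first meets `C3`, at `s` and `t` respectively.
Since `C2` meets `C3` in at least two vertices, `s ≠ t`. The two arcs of `C2` from `u` up to just
before `s` and `t`, together with `P` minus its end `v`, form a connected set `U` disjoint from `C3`
and adjacent to the three distinct vertices `s`, `t`, `v` of `C3`. Cutting `C3` into three arcs, each
containing one of `s`, `t`, `v`, gives with `U` the four branch sets of a `K_4` minor
(`hasK4Minor_of_cycle`).
-/

open SimpleGraph

theorem hasK4Minor_of_sets {V : Type*} (G : SimpleGraph V) (A : Fin 4 → Set V)
    (hconn : ∀ i, (G.induce (A i)).Connected)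
    (hdis : ∀ i j, i < j → ∀ w ∈ A i, w ∉ A j)
    (hadj : ∀ i j, i < j → ∃ a ∈ A i, ∃ b ∈ A j, G.Adj a b) : HasK4Minor G := by
  refine ⟨fun i => (⊤ : G.Subgraph).induce (A i), fun i => ?_, fun i => ?_, fun i j hij => ?_,
    fun i j hij => ?_⟩
  · obtain ⟨w⟩ := (hconn i).nonempty
    exact ⟨w.1, w.2⟩
  · exact connected_induce_iff.1 (hconn i)
  · rw [Set.disjoint_left]
    intro w hwi hwj
    rcases lt_or_gt_of_ne hij with h | h
    · exact hdis i j h w hwi hwj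
    · exact hdis j i h w hwj hwi
  · rcases lt_or_gt_of_ne hij with h | h
    · exact hadj i j h
    · obtain ⟨a, ha, b, hb, hab⟩ := hadj j i h
      exact ⟨b, hb, a, ha, hab.symm⟩

theorem connected_image_Icc {V : Type*} (G : SimpleGraph V) {s t : V} (p : G.Walk s t) (a b : ℕ)
    (hab : a ≤ b) (hb : b ≤ p.length) : (G.induce (p.getVert '' Set.Icc a b)).Connected := by
  induction b, hab using Nat.le_induction with
  | base =>
    rw [Set.Icc_self, Set.image_singleton, induce_singleton_eq_top]
    exact connected_top
  | succ b hab ih =>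
    have h1 := induce_union_connected (ih (by omega)).preconnected
      (induce_pair_connected_of_adj (p.adj_getVert_succ (i := b) (by omega))).preconnected
      ⟨p.getVert b, ⟨b, ⟨hab, le_rfl⟩, rfl⟩, by simp⟩
    convert h1 using 2
    all_goals
      ext w
      constructor
      · rintro ⟨k, ⟨h1, h2⟩, rfl⟩
        rcases Nat.lt_or_ge b k with h | h
        · obtain rfl : k = b + 1 := by omega
          simp
        · exact Or.inl ⟨k, ⟨h1, h⟩, rfl⟩
      · rintro (⟨k, ⟨h1, h2⟩, rfl⟩ | h | h)
        · exact ⟨k, ⟨h1, by omega⟩, rfl⟩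
        · exact ⟨b, ⟨hab, by omega⟩, h.symm⟩
        · exact ⟨b + 1, ⟨by omega, le_rfl⟩, h.symm⟩

/-- A cycle cut into three consecutive arcs starting at the indices `0 < i < j`, plus a connected set
disjoint from it and adjacent to the starts of the arcs. The arcs are the index intervals
`[0, i)`, `[i, j)` and `[j, C.length)`; stopping before `C.length` avoids counting the base point twice. -/
theorem hasK4Minor_of_cycle_indices {V : Type*} (G : SimpleGraph V) {a : V} (C : G.Walk a a)
    (hC : C.IsCycle) (i j : ℕ) (hi : 0 < i) (hij : i < j) (hj : j < C.length)
    (U : Set V) (hU : (G.induce U).Connected) (hdis : ∀ w ∈ U, w ∉ C.support)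
    (ha : ∃ w ∈ U, G.Adj w a) (hb : ∃ w ∈ U, G.Adj w (C.getVert i))
    (hc : ∃ w ∈ U, G.Adj w (C.getVert j)) : HasK4Minor G := by
  have hinj : ∀ k l, k < C.length → l < C.length → C.getVert k = C.getVert l → k = l :=
    fun k l hk hl h => hC.getVert_injOn' (by show k ≤ _; omega) (by show l ≤ _; omega) h
  have hUC : ∀ w ∈ U, ∀ p q, w ∉ C.getVert '' Set.Icc p q := by
    rintro w hw p q ⟨k, -, rfl⟩
    exact hdis _ hw (C.getVert_mem_support k)
  have hI : ∀ p q r s, q < r → s < C.length →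
      ∀ w ∈ C.getVert '' Set.Icc p q, w ∉ C.getVert '' Set.Icc r s := by
    rintro p q r s hqr hs _ ⟨k, ⟨-, hk⟩, rfl⟩ ⟨l, ⟨hl, hl'⟩, he⟩
    have := hinj l k (by omega) (by omega) he
    omega
  have hadj : ∀ k, k < C.length → G.Adj (C.getVert k) (C.getVert (k + 1)) :=
    fun k hk => C.adj_getVert_succ hk
  apply hasK4Minor_of_sets G ![U, C.getVert '' Set.Icc 0 (i - 1), C.getVert '' Set.Icc i (j - 1),
    C.getVert '' Set.Icc j (C.length - 1)]
  · intro k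
    fin_cases k
    · exact hU
    · exact connected_image_Icc G C _ _ (by omega) (by omega)
    · exact connected_image_Icc G C _ _ (by omega) (by omega)
    · exact connected_image_Icc G C _ _ (by omega) (by omega)
  · intro k l hkl
    fin_cases k <;> fin_cases l <;> first | exact absurd hkl (by decide) | skip
    · exact fun w hw => hUC w hw _ _
    · exact fun w hw => hUC w hw _ _
    · exact fun w hw => hUC w hw _ _
    · exact hI _ _ _ _ (by omega) (by omega)
    · exact hI _ _ _ _ (by omega) (by omega)
    · exact hI _ _ _ _ (by omega) (by omega)
  · intro k l hkl
    fin_cases k <;> fin_cases l <;> first | exact absurd hkl (by decide) | skip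
    · obtain ⟨w, hw, h⟩ := ha
      exact ⟨w, hw, a, ⟨0, ⟨le_rfl, by omega⟩, C.getVert_zero⟩, h⟩
    · obtain ⟨w, hw, h⟩ := hb
      exact ⟨w, hw, _, ⟨i, ⟨le_rfl, by omega⟩, rfl⟩, h⟩
    · obtain ⟨w, hw, h⟩ := hc
      exact ⟨w, hw, _, ⟨j, ⟨le_rfl, by omega⟩, rfl⟩, h⟩
    · refine ⟨_, ⟨i - 1, ⟨by omega, by omega⟩, rfl⟩, _, ⟨i, ⟨le_rfl, by omega⟩, rfl⟩, ?_⟩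
      have := hadj (i - 1) (by omega)
      rwa [Nat.sub_add_cancel (by omega)] at this
    · refine ⟨_, ⟨0, ⟨le_rfl, by omega⟩, rfl⟩, _,
        ⟨C.length - 1, ⟨by omega, le_rfl⟩, rfl⟩, ?_⟩
      -- The edge closing the cycle, from its last index back to the base point.
      have := hadj (C.length - 1) (by omega)
      rw [Nat.sub_add_cancel (by omega), C.getVert_length] at this
      rw [C.getVert_zero]
      exact this.symm
    · refine ⟨_, ⟨j - 1, ⟨by omega, by omega⟩, rfl⟩, _, ⟨j, ⟨le_rfl, by omega⟩, rfl⟩, ?_⟩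
      have := hadj (j - 1) (by omega)
      rwa [Nat.sub_add_cancel (by omega)] at this

/-- A cycle together with a disjoint connected set adjacent to three distinct vertices of the cycle
gives a `K_4` minor. -/
theorem hasK4Minor_of_cycle {V : Type*} (G : SimpleGraph V) {o a b c : V} (C : G.Walk o o)
    (hC : C.IsCycle) (haC : a ∈ C.support) (hbC : b ∈ C.support) (hcC : c ∈ C.support)
    (hab : a ≠ b) (hac : a ≠ c) (hbc : b ≠ c)
    (U : Set V) (hU : (G.induce U).Connected) (hdis : ∀ w ∈ U, w ∉ C.support)
    (ha : ∃ w ∈ U, G.Adj w a) (hb : ∃ w ∈ U, G.Adj w b) (hc : ∃ w ∈ U, G.Adj w c) :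
    HasK4Minor G := by
  classical
  have hmem : ∀ w, w ∈ (C.rotate a haC).support ↔ w ∈ C.support := fun w => Walk.mem_support_rotate_iff ..
  have hC' := hC.rotate haC
  generalize C.rotate a haC = D at hmem hC'
  simp only [← hmem] at hbC hcC hdis
  -- An index of a vertex other than the base point lies strictly inside `(0, D.length)`.
  have key : ∀ w ∈ D.support, a ≠ w → ∃ k, 0 < k ∧ k < D.length ∧ D.getVert k = w := by
    intro w hw haw
    obtain ⟨k, rfl, hk⟩ := Walk.mem_support_iff_exists_getVert.1 hw
    refine ⟨k, Nat.pos_of_ne_zero ?_, lt_of_le_of_ne hk ?_, rfl⟩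
    · rintro rfl
      exact haw D.getVert_zero.symm
    · rintro rfl
      exact haw D.getVert_length.symm
  obtain ⟨i, hi, hi', rfl⟩ := key b hbC hab
  obtain ⟨j, hj, hj', rfl⟩ := key c hcC hac
  rcases lt_trichotomy i j with h | rfl | h
  · exact hasK4Minor_of_cycle_indices G D hC' i j hi h hj' U hU hdis ha hb hc
  · exact absurd rfl hbc
  · exact hasK4Minor_of_cycle_indices G D hC' j i hj h hi' U hU hdis ha hc hb

theorem stmt7 {V : Type*} (H : SimpleGraph V) (x y : V) (hxy : H.Adj x y)
    (ρ : V → Fin 3) (hx : ρ x = 0) (hy : ρ y = 0)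
    (hmono : ∀ a b, H.Adj a b → ρ a = ρ b → s(a,b) = s(x,y))
    (a2 a3 : V) (C2 : H.Walk a2 a2) (C3 : H.Walk a3 a3)
    (hC2 : C2.IsCycle) (hC3 : C3.IsCycle)
    (hC2c : ∀ v ∈ C2.support, ρ v ≠ 2) (hC3c : ∀ v ∈ C3.support, ρ v ≠ 1)
    (he2 : s(x,y) ∈ C2.edges) (he3 : s(x,y) ∈ C3.edges)
    (u v : V) (P : H.Walk u v) (hP : P.IsPath)
    (hPc : ∀ w ∈ P.support, ρ w ≠ 0)
    (huC2 : u ∈ C2.support) (hvC3 : v ∈ C3.support)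
    (hint : ∀ w ∈ P.support, w ≠ u → w ≠ v → w ∉ C2.support ∧ w ∉ C3.support)
    (hu : ρ u = 1) (huC3 : u ∉ C3.support)
    (hv : ρ v = 2) (hvC2 : v ∉ C2.support) :
    HasK4Minor H := by
  classical
  have hmem : ∀ w, w ∈ (C2.rotate u huC2).support ↔ w ∈ C2.support := fun w => Walk.mem_support_rotate_iff ..
  have hcyc := hC2.rotate huC2
  have hx2 := C2.fst_mem_support_of_mem_edges he2
  have hy2 := C2.snd_mem_support_of_mem_edges he2
  have hx3 := C3.fst_mem_support_of_mem_edges he3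
  have hy3 := C3.snd_mem_support_of_mem_edges he3
  generalize C2.rotate u huC2 = D at hmem hcyc
  -- Indices along `D`, which is `C2` based at `u`, of the vertices shared with `C3`.
  have key : ∀ w ∈ C2.support, w ∈ C3.support →
      ∃ k, 0 < k ∧ k < D.length ∧ D.getVert k = w := by
    intro w hw hw3
    obtain ⟨k, rfl, hk⟩ := Walk.mem_support_iff_exists_getVert.1 ((hmem w).2 hw)
    refine ⟨k, Nat.pos_of_ne_zero ?_, lt_of_le_of_ne hk ?_, rfl⟩
    · rintro rfl
      exact huC3 (D.getVert_zero ▸ hw3)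
    · rintro rfl
      exact huC3 (D.getVert_length ▸ hw3)
  obtain ⟨kx, hkx, hkx', hkxe⟩ := key x hx2 hx3
  obtain ⟨ky, hky, hky', hkye⟩ := key y hy2 hy3
  have hkne : kx ≠ ky := by
    rintro rfl
    exact hxy.ne (hkxe.symm.trans hkye)
  let Q : ℕ → Prop := fun k => k ≤ D.length ∧ D.getVert k ∈ C3.support
  have hQx : Q kx := ⟨hkx'.le, hkxe ▸ hx3⟩
  have hQy : Q ky := ⟨hky'.le, hkye ▸ hy3⟩
  obtain ⟨i, hQi, himin⟩ : ∃ i, Q i ∧ ∀ k, Q k → i ≤ k :=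
    ⟨Nat.find ⟨kx, hQx⟩, Nat.find_spec ⟨kx, hQx⟩, fun k hk => Nat.find_min' _ hk⟩
  obtain ⟨j, hQj, hjmax⟩ : ∃ j, Q j ∧ ∀ k, Q k → k ≤ j :=
    ⟨Nat.findGreatest Q D.length, Nat.findGreatest_spec (P := Q) hkx'.le hQx,
      fun k hk => Nat.le_findGreatest hk.1 hk⟩
  have hQ0 : ¬ Q 0 := fun h => huC3 (D.getVert_zero ▸ h.2)
  have hQn : ¬ Q D.length := fun h => huC3 (D.getVert_length ▸ h.2)
  have hi0 : 0 < i := Nat.pos_of_ne_zero fun h => hQ0 (h ▸ hQi)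
  have hjn : j < D.length := lt_of_le_of_ne hQj.1 fun h => hQn (h ▸ hQj)
  have hij : i < j := by
    have := himin kx hQx
    have := himin ky hQy
    have := hjmax kx hQx
    have := hjmax ky hQy
    omega
  have hD2 : ∀ k, D.getVert k ∈ C2.support := fun k => (hmem _).1 (D.getVert_mem_support k)
  have hst : D.getVert i ≠ D.getVert j := fun h => hij.ne
    (hcyc.getVert_injOn' (by show i ≤ _; omega) (by show j ≤ _; omega) h)
  have huv : u ≠ v := fun h => hvC2 (h ▸ huC2)
  have hPpos : 0 < P.length := by
    rcases Nat.eq_zero_or_pos P.length with h | h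
    · exact absurd (Walk.eq_of_length_eq_zero h) huv
    · exact h
  -- The three legs of the fan from `u` to `s = D.getVert i`, `t = D.getVert j` and `v`, without
  -- their far ends.
  have c1 := connected_image_Icc H D 0 (i - 1) (by omega) (by omega)
  have c2 := connected_image_Icc H D (j + 1) D.length (by omega) le_rfl
  have c3 := connected_image_Icc H P 0 (P.length - 1) (by omega) (by omega)
  have c12 := induce_union_connected c1.preconnected c2.preconnected
    ⟨u, ⟨0, ⟨le_rfl, by omega⟩, D.getVert_zero⟩, ⟨D.length, ⟨by omega, le_rfl⟩, D.getVert_length⟩⟩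
  have cU := induce_union_connected c12.preconnected c3.preconnected
    ⟨u, Or.inl ⟨0, ⟨le_rfl, by omega⟩, D.getVert_zero⟩, ⟨0, ⟨le_rfl, by omega⟩, P.getVert_zero⟩⟩
  refine hasK4Minor_of_cycle H C3 hC3 hQi.2 hQj.2 hvC3 hst (fun h => hvC2 (h ▸ hD2 i))
    (fun h => hvC2 (h ▸ hD2 j)) _ cU ?_ ?_ ?_ ?_
  · rintro w ((⟨k, ⟨-, hk⟩, rfl⟩ | ⟨k, ⟨hk, hk'⟩, rfl⟩) | ⟨k, ⟨-, hk⟩, rfl⟩) hw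
    · have := himin k ⟨by omega, hw⟩
      omega
    · have := hjmax k ⟨hk', hw⟩
      omega
    · by_cases hwu : P.getVert k = u
      · exact huC3 (hwu ▸ hw)
      · refine (hint _ (P.getVert_mem_support k) hwu fun hwv => ?_).2 hw
        have : k = P.length := hP.getVert_injOn (by show k ≤ _; omega) (le_refl P.length)
          (hwv.trans P.getVert_length.symm)
        omega
  · refine ⟨_, Or.inl (Or.inl ⟨i - 1, ⟨by omega, le_rfl⟩, rfl⟩), ?_⟩
    have := D.adj_getVert_succ (i := i - 1) (by omega)
    rwa [Nat.sub_add_cancel (by omega)] at this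
  · exact ⟨_, Or.inl (Or.inr ⟨j + 1, ⟨le_rfl, by omega⟩, rfl⟩), (D.adj_getVert_succ hjn).symm⟩
  · refine ⟨_, Or.inr ⟨P.length - 1, ⟨by omega, le_rfl⟩, rfl⟩, ?_⟩
    have := P.adj_getVert_succ (i := P.length - 1) (by omega)
    rwa [Nat.sub_add_cancel (by omega), P.getVert_length] at this
end

section
/- Every graph with no K_4 minor is 3-colorable. -/
/-!
A graph without a `K₄` minor is 3-colourable, by induction on the number of edges.

*Density.* A graph with `n ≥ 2` vertices and at least `2n - 2` edges has a `K₄` minor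
(`k4_of_dense`). If some edge lies in at most one triangle, contracting it loses one vertex and at
most two edges, so induction applies. Otherwise every edge lies in at least two triangles, so every
vertex `v` of positive degree has a neighbourhood of minimum degree at least two; such a
neighbourhood contains a cycle, which together with `v` contracts to `K₄`
(`k4_of_neighborhood`).

*Colouring.* Hence a `K₄`-minor-free graph with an edge has a vertex `v` of degree 1, 2 or 3. If `v`
has two non-adjacent neighbours `a`, `b`, contract `{v, a, b}` to a point; a 3-colouring of the
contraction lifts to a 3-colouring of `G - v` in which `a` and `b` agree. Otherwise the
neighbourhood of `v` is a clique, of at most two vertices because `G` has no `K₄`, and any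
3-colouring of `G - v` will do. In both cases the neighbours of `v` use at most two colours, and a
colour is left for `v`.

All intermediate graphs live on the same vertex type: vertices which disappear in a contraction or
a deletion are kept as isolated vertices. To allow this, the branch sets of a minor may be empty.
-/

open SimpleGraph

namespace K4Free

variable {V W X : Type*}

/-! ### Connected sets and minors -/

/-- `s` induces a preconnected (possibly empty) subgraph of `G`, expressed as an induction
principle: a set meeting `s` and closed under adjacency within `s` contains `s`. -/
def Conn (G : SimpleGraph V) (s : Set V) : Prop :=
  ∀ A : Set V, (∃ x ∈ s, x ∈ A) → (∀ a ∈ A, a ∈ s → ∀ b ∈ s, G.Adj a b → b ∈ A) → s ⊆ A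

/-- `H` is a minor of `G`, witnessed by branch sets. Branch sets may be empty, which makes a
difference only at isolated vertices of `H`. -/
def IsMinor (H : SimpleGraph W) (G : SimpleGraph V) : Prop :=
  ∃ B : W → Set V, (∀ w, Conn G (B w)) ∧ (∀ x y, x ≠ y → Disjoint (B x) (B y)) ∧
    ∀ x y, H.Adj x y → ∃ a ∈ B x, ∃ b ∈ B y, G.Adj a b

/-- A set in which a vertex `c` is adjacent to all others is connected. The condition `c ∈ s` is
placed inside the disjunction so that the empty set is covered as well. -/
theorem Conn.star {G : SimpleGraph V} {s : Set V} (c : V)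
    (h : ∀ x ∈ s, x = c ∨ (c ∈ s ∧ G.Adj c x)) : Conn G s := by
  intro A ⟨x, hx, hxA⟩ hcl y hy
  have hc : c ∈ A := by
    rcases h x hx with rfl | ⟨hc, ha⟩
    · exact hxA
    · exact hcl x hxA hx c hc ha.symm
  rcases h y hy with rfl | ⟨hcs, ha⟩
  · exact hc
  · exact hcl c hc hcs y hy ha

theorem Conn.singleton (G : SimpleGraph V) (x : V) : Conn G {x} :=
  Conn.star x fun _ h => Or.inl h

theorem Conn.insert_adj {G : SimpleGraph V} {s : Set V} (hs : Conn G s) {t b : V} (ht : t ∈ s)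
    (hb : G.Adj t b) : Conn G (insert b s) := by
  intro A ⟨x, hx, hxA⟩ hcl
  have key : t ∈ A → insert b s ⊆ A := by
    intro htA
    refine Set.insert_subset (hcl t htA (Or.inr ht) b (Or.inl rfl) hb) ?_
    exact hs A ⟨t, ht, htA⟩ fun a ha has c hc hac => hcl a ha (Or.inr has) c (Or.inr hc) hac
  rcases hx with rfl | hx
  · exact key (hcl x hxA (Or.inl rfl) t (Or.inr ht) hb.symm)
  · exact key (hs A ⟨x, hx, hxA⟩
      (fun a ha has c hc hac => hcl a ha (Or.inr has) c (Or.inr hc) hac) ht)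

/-- The union of the branch sets over a connected set of `H` is connected; this makes the minor
relation transitive. -/
theorem Conn.biUnion {H : SimpleGraph W} {G : SimpleGraph V} {B : W → Set V}
    (hB : ∀ w, Conn G (B w)) (hadj : ∀ x y, H.Adj x y → ∃ a ∈ B x, ∃ b ∈ B y, G.Adj a b)
    {T : Set W} (hT : Conn H T) : Conn G {v | ∃ w ∈ T, v ∈ B w} := by
  rintro A ⟨x, ⟨w₀, hw₀, hx⟩, hxA⟩ hcl
  have sub : ∀ w ∈ T, ∀ y ∈ B w, y ∈ A → B w ⊆ A := fun w hw y hy hyA =>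
    hB w A ⟨y, hy, hyA⟩ fun a ha haw b hb hab => hcl a ha ⟨w, hw, haw⟩ b ⟨w, hw, hb⟩ hab
  have hTA : T ⊆ {w | B w ⊆ A} := by
    refine hT _ ⟨w₀, hw₀, sub w₀ hw₀ x hx hxA⟩ ?_
    intro w hwA hw w' hw' hww'
    obtain ⟨a, ha, b, hb, hab⟩ := hadj w w' hww'
    exact sub w' hw' b hb (hcl a (hwA ha) ⟨w, hw, ha⟩ b ⟨w', hw', hb⟩ hab)
  rintro y ⟨w, hw, hy⟩
  exact hTA hw hy

theorem IsMinor.trans {K : SimpleGraph X} {H : SimpleGraph W} {G : SimpleGraph V}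
    (h₁ : IsMinor K H) (h₂ : IsMinor H G) : IsMinor K G := by
  obtain ⟨C, hC, hCd, hCa⟩ := h₁
  obtain ⟨B, hB, hBd, hBa⟩ := h₂
  refine ⟨fun x => {v | ∃ w ∈ C x, v ∈ B w}, fun x => Conn.biUnion hB hBa (hC x), ?_, ?_⟩
  · intro x y hxy
    rw [Set.disjoint_left]
    rintro v ⟨w, hw, hv⟩ ⟨w', hw', hv'⟩
    rcases eq_or_ne w w' with rfl | hne
    · exact Set.disjoint_left.1 (hCd x y hxy) hw hw'
    · exact Set.disjoint_left.1 (hBd w w' hne) hv hv'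
  · intro x y hxy
    obtain ⟨w, hw, w', hw', hww'⟩ := hCa x y hxy
    obtain ⟨a, ha, b, hb, hab⟩ := hBa w w' hww'
    exact ⟨a, ⟨w, hw, ha⟩, b, ⟨w', hw', hb⟩, hab⟩

theorem IsMinor.of_le {H G : SimpleGraph V} (h : H ≤ G) : IsMinor H G :=
  ⟨fun x => {x}, fun x => Conn.singleton G x, fun x y hxy => by simpa using hxy,
    fun x y hxy => ⟨x, rfl, y, rfl, h hxy⟩⟩

theorem hasK4Minor_of_isMinor {G : SimpleGraph V}
    (h : IsMinor (⊤ : SimpleGraph (Fin 4)) G) : HasK4Minor G := by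
  obtain ⟨B, hB, hBd, hBa⟩ := h
  -- Every vertex of `K₄` has a neighbour, so its branch set is nonempty.
  have hne : ∀ i, (B i).Nonempty := fun i => by
    obtain ⟨j, hj⟩ := exists_ne i
    obtain ⟨a, ha, -⟩ := hBa i j hj.symm
    exact ⟨a, ha⟩
  refine ⟨fun i => (⊤ : G.Subgraph).induce (B i), hne, fun i => ?_, hBd, fun i j hij =>
    hBa i j hij⟩
  obtain ⟨x, hx⟩ := hne i
  let K := (⊤ : G.Subgraph).induce (B i)
  have hreach : B i ⊆ {y | ∃ hy : y ∈ B i, K.coe.Reachable ⟨x, hx⟩ ⟨y, hy⟩} := by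
    refine hB i _ ⟨x, hx, hx, SimpleGraph.Reachable.refl _⟩ ?_
    rintro a ⟨ha, har⟩ - b hb hab
    refine ⟨hb, har.trans (SimpleGraph.Adj.reachable ?_)⟩
    change K.Adj a b
    exact ⟨ha, hb, hab⟩
  rw [SimpleGraph.Subgraph.connected_iff']
  rw [SimpleGraph.connected_iff_exists_forall_reachable]
  exact ⟨⟨x, hx⟩, fun y => (hreach y.2).2⟩

/-! ### Contraction of a star -/

open Classical in
/-- The vertices of `A` are identified with `c`, becoming isolated themselves. -/
noncomputable def collapse (c : V) (A : Set V) (x : V) : V := if x ∈ A then c else x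

/-- The graph obtained from `G` by contracting `A ∪ {c}` to the vertex `c`. -/
def contract (G : SimpleGraph V) (c : V) (A : Set V) : SimpleGraph V where
  Adj x y := x ≠ y ∧ ∃ a b, collapse c A a = x ∧ collapse c A b = y ∧ G.Adj a b
  symm := ⟨by
    rintro x y ⟨hne, a, b, ha, hb, hab⟩
    exact ⟨hne.symm, b, a, hb, ha, hab.symm⟩⟩
  loopless := ⟨fun x h => h.1 rfl⟩

theorem collapse_of_mem {c : V} {A : Set V} {x : V} (h : x ∈ A) : collapse c A x = c := if_pos h

theorem collapse_of_notMem {c : V} {A : Set V} {x : V} (h : x ∉ A) : collapse c A x = x := if_neg h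

theorem isMinor_contract {G : SimpleGraph V} {c : V} {A : Set V} (hA : ∀ a ∈ A, G.Adj c a) :
    IsMinor (contract G c A) G := by
  have hc : c ∉ A := fun h => (hA c h).ne rfl
  refine ⟨fun x => {y | collapse c A y = x}, fun x => ?_, ?_, ?_⟩
  · refine Conn.star x fun y hy => ?_
    by_cases hyA : y ∈ A
    · have : c = x := by rw [← collapse_of_mem (c := c) hyA]; exact hy
      subst this
      exact Or.inr ⟨collapse_of_notMem hc, hA y hyA⟩
    · left
      rw [← collapse_of_notMem (c := c) hyA]; exact hy
  · intro x y hxy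
    rw [Set.disjoint_left]
    rintro z rfl h
    exact hxy h
  · rintro x y ⟨-, a, b, ha, hb, hab⟩
    exact ⟨a, ha, b, hb, hab⟩

theorem contract_adj_of_adj {G : SimpleGraph V} {c : V} {A : Set V} {x y : V}
    (hne : collapse c A x ≠ collapse c A y) (h : G.Adj x y) :
    (contract G c A).Adj (collapse c A x) (collapse c A y) :=
  ⟨hne, x, y, rfl, rfl, h⟩

/-! ### Cycles in a neighbourhood -/

/-- A vertex `z` of a connected set `T` has a neighbour in a connected subset of `T \ {z}`
containing a prescribed vertex `y`, namely in the component of `y`. -/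
theorem exists_conn_adj [Finite V] {G : SimpleGraph V} {T : Set V} (hT : Conn G T) {y z : V}
    (hy : y ∈ T) (hz : z ∈ T) (hyz : y ≠ z) :
    ∃ C ⊆ T, y ∈ C ∧ z ∉ C ∧ Conn G C ∧ ∃ a ∈ C, G.Adj a z := by
  obtain ⟨C, hCmax⟩ := (Set.toFinite {C : Set V | C ⊆ T ∧ y ∈ C ∧ z ∉ C ∧ Conn G C}).exists_maximal
    ⟨{y}, by simpa using hy, rfl, by simpa using hyz.symm, Conn.singleton G y⟩
  obtain ⟨hCT, hyC, hzC, hC⟩ := hCmax.prop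
  refine ⟨C, hCT, hyC, hzC, hC, ?_⟩
  by_contra! hno
  refine hzC (hT C ⟨y, hy, hyC⟩ ?_ hz)
  intro a ha _ b hb hab
  by_contra hbC
  have hbz : b ≠ z := fun h => hno a ha (h ▸ hab)
  refine hbC (hCmax.le_of_ge (y := insert b C) ⟨Set.insert_subset hb hCT, Or.inr hyC, ?_,
    hC.insert_adj ha hab⟩ (Set.subset_insert b C) (Set.mem_insert b C))
  rintro (h | h)
  · exact hbz h.symm
  · exact hzC h

/-- A nonempty neighbourhood of minimum degree at least two yields a `K₄` minor: a vertex `x` of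
the neighbourhood with two neighbours in a connected set `T` avoiding it exists by maximality of
`T` (this replaces the end of a longest path). -/
theorem k4_of_neighborhood [Finite V] {G : SimpleGraph V} {v w : V} (hw : G.Adj v w)
    (h2 : ∀ x, G.Adj v x → ∃ y z, y ≠ z ∧ G.Adj v y ∧ G.Adj v z ∧ G.Adj x y ∧ G.Adj x z) :
    IsMinor (⊤ : SimpleGraph (Fin 4)) G := by
  obtain ⟨T, hTmax⟩ := (Set.toFinite {T : Set V | Conn G T ∧ (∀ t ∈ T, G.Adj v t) ∧
      ∃ x ∉ T, G.Adj v x ∧ ∃ t ∈ T, G.Adj t x}).exists_maximal (by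
    obtain ⟨y, _, _, hy, _, hwy, _⟩ := h2 w hw
    exact ⟨{w}, Conn.singleton G w, by simpa using hw, y, by simpa using hwy.ne', hy, w, rfl, hwy⟩)
  obtain ⟨hT, hTv, x, hxT, hvx, t, ht, htx⟩ := hTmax.prop
  have hin : ∀ y, G.Adj v y → G.Adj x y → y ∈ T := by
    intro y hvy hxy
    by_contra hyT
    refine hxT (hTmax.le_of_ge (y := insert x T) ⟨hT.insert_adj ht htx, ?_, y, ?_, hvy, x,
      Or.inl rfl, hxy⟩ (Set.subset_insert x T) (Set.mem_insert x T))
    · rintro s (rfl | hs)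
      · exact hvx
      · exact hTv s hs
    · rintro (h | h)
      · exact hxy.ne h.symm
      · exact hyT h
  obtain ⟨y, z, hyz, hvy, hvz, hxy, hxz⟩ := h2 x hvx
  have hyT := hin y hvy hxy
  have hzT := hin z hvz hxz
  obtain ⟨C, hCT, hyC, hzC, hC, a, haC, haz⟩ := exists_conn_adj hT hyT hzT hyz
  have hvC : v ∉ C := fun h => (hTv v (hCT h)).ne rfl
  have hxC : x ∉ C := fun h => hxT (hCT h)
  refine ⟨![{v}, {x}, {z}, C], ?_, ?_, ?_⟩
  · intro i
    fin_cases i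
    · exact Conn.singleton G v
    · exact Conn.singleton G x
    · exact Conn.singleton G z
    · exact hC
  · intro i j hij
    have := hvx.ne
    have := hvz.ne
    have := hxz.ne
    fin_cases i <;> fin_cases j <;> simp_all [eq_comm]
  · have e01 : ∃ a ∈ ({v} : Set V), ∃ b ∈ ({x} : Set V), G.Adj a b := ⟨v, rfl, x, rfl, hvx⟩
    have e02 : ∃ a ∈ ({v} : Set V), ∃ b ∈ ({z} : Set V), G.Adj a b := ⟨v, rfl, z, rfl, hvz⟩
    have e03 : ∃ a ∈ ({v} : Set V), ∃ b ∈ C, G.Adj a b := ⟨v, rfl, y, hyC, hvy⟩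
    have e12 : ∃ a ∈ ({x} : Set V), ∃ b ∈ ({z} : Set V), G.Adj a b := ⟨x, rfl, z, rfl, hxz⟩
    have e13 : ∃ a ∈ ({x} : Set V), ∃ b ∈ C, G.Adj a b := ⟨x, rfl, y, hyC, hxy⟩
    have e23 : ∃ a ∈ ({z} : Set V), ∃ b ∈ C, G.Adj a b := ⟨z, rfl, a, haC, haz.symm⟩
    have sw : ∀ {s t : Set V}, (∃ a ∈ s, ∃ b ∈ t, G.Adj a b) → ∃ a ∈ t, ∃ b ∈ s, G.Adj a b :=
      fun ⟨a, ha, b, hb, hab⟩ => ⟨b, hb, a, ha, hab.symm⟩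
    intro i j hij
    fin_cases i <;> fin_cases j <;>
      first
      | exact absurd rfl hij
      | assumption
      | (apply sw; assumption)

/-! ### Edge density -/

/-- Contracting `v` into `u` loses at most one edge plus one for each common neighbour. -/
theorem ncard_edgeSet_le_contract [Finite V] {G : SimpleGraph V} (u v : V) :
    G.edgeSet.ncard ≤ (contract G u {v}).edgeSet.ncard + 1 +
      (G.neighborSet v ∩ G.neighborSet u).ncard := by
  set E₀ : Set (Sym2 V) := {e | e ∈ G.edgeSet ∧ v ∉ e}
  set N := G.neighborSet v
  set R := N \ insert u (G.neighborSet u)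
  have hinj : ∀ w : V, Function.Injective fun y => s(w, y) := fun w y z h =>
    Sym2.congr_right.1 h
  have h1 : G.edgeSet ⊆ E₀ ∪ (fun y => s(v, y)) '' N := by
    intro e he
    by_cases hv : v ∈ e
    · obtain ⟨y, rfl⟩ := Sym2.mem_iff_exists.1 hv
      exact Or.inr ⟨y, he, rfl⟩
    · exact Or.inl ⟨he, hv⟩
  have h2 : E₀ ∪ (fun y => s(u, y)) '' R ⊆ (contract G u {v}).edgeSet := by
    rintro e (⟨he, hv⟩ | ⟨y, ⟨hy, hyu⟩, rfl⟩)
    · induction e with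
      | _ x y =>
        simp only [Sym2.mem_iff, not_or] at hv
        exact ⟨he.ne, x, y, collapse_of_notMem (fun h => hv.1 h.symm),
          collapse_of_notMem (fun h => hv.2 h.symm), he⟩
    · refine ⟨fun h => hyu (Or.inl h.symm), v, y, collapse_of_mem rfl, collapse_of_notMem ?_, hy⟩
      exact fun h => hy.ne h.symm
  have hd : Disjoint E₀ ((fun y => s(u, y)) '' R) := by
    rw [Set.disjoint_left]
    rintro e ⟨he, -⟩ ⟨y, ⟨hy, hyu⟩, rfl⟩
    exact hyu (Or.inr he)
  have c1 := Set.ncard_le_ncard h1 (Set.toFinite _)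
  have c2 := Set.ncard_le_ncard h2 (Set.toFinite _)
  have c3 := Set.ncard_union_le E₀ ((fun y => s(v, y)) '' N)
  rw [Set.ncard_union_eq hd (Set.toFinite _) (Set.toFinite _),
    Set.ncard_image_of_injective _ (hinj u)] at c2
  rw [Set.ncard_image_of_injective _ (hinj v)] at c3
  have h3 : N ⊆ R ∪ insert u (N ∩ G.neighborSet u) := by
    intro y hy
    by_cases h : y ∈ insert u (G.neighborSet u)
    · rcases h with h | h
      · exact Or.inr (Or.inl h)
      · exact Or.inr (Or.inr ⟨hy, h⟩)
    · exact Or.inl ⟨hy, h⟩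
  have c4 := Set.ncard_le_ncard h3 (Set.toFinite _)
  have c5 := Set.ncard_union_le R (insert u (N ∩ G.neighborSet u))
  have c6 := Set.ncard_insert_le u (N ∩ G.neighborSet u)
  omega

/-- A graph whose edges lie within a set `S` of `n ≥ 2` vertices and which has at least `2n - 2`
edges has a `K₄` minor. -/
theorem k4_of_dense [Finite V] (n : ℕ) : ∀ (G : SimpleGraph V) (S : Set V), S.ncard = n → 2 ≤ n →
    (∀ x y, G.Adj x y → x ∈ S) → 2 * n ≤ G.edgeSet.ncard + 2 →
    IsMinor (⊤ : SimpleGraph (Fin 4)) G := by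
  induction n with
  | zero => intro G S _ h; omega
  | succ n ih =>
    intro G S hS hn hGS hE
    by_cases h2 : ∀ u v, G.Adj u v → 1 < (G.neighborSet v ∩ G.neighborSet u).ncard
    · have hne : G.edgeSet.Nonempty := by
        rw [← Set.ncard_pos (Set.toFinite _)]; omega
      obtain ⟨e, he⟩ := hne
      induction e with
      | _ v w =>
        refine k4_of_neighborhood (v := v) (w := w) he fun x hx => ?_
        obtain ⟨y, hy, z, hz, hyz⟩ := (Set.one_lt_ncard (Set.toFinite _)).1 (h2 x v hx.symm)
        exact ⟨y, z, hyz, hy.1, hz.1, hy.2, hz.2⟩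
    · push Not at h2
      obtain ⟨u, v, huv, hle⟩ := h2
      have hcount := ncard_edgeSet_le_contract (G := G) u v
      refine IsMinor.trans (ih (contract G u {v}) (S \ {v}) ?_ ?_ ?_ ?_)
        (isMinor_contract (by simpa using huv))
      · rw [Set.ncard_sdiff_singleton_of_mem (hGS v u huv.symm)]; omega
      · -- Two vertices do not span two edges.
        by_contra hn2
        obtain ⟨p, q, hpq, rfl⟩ := Set.ncard_eq_two.1 (show S.ncard = 2 by omega)
        have hsub : G.edgeSet ⊆ {s(p, q)} := by
          intro e he
          induction e with
          | _ x y =>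
            have hx := hGS x y he
            have hy := hGS y x he.symm
            have hxy : x ≠ y := he.ne
            simp only [Set.mem_insert_iff, Set.mem_singleton_iff] at hx hy ⊢
            rcases hx with rfl | rfl <;> rcases hy with rfl | rfl <;>
              simp_all [Sym2.eq_swap]
        have := Set.ncard_le_ncard hsub (Set.toFinite _)
        rw [Set.ncard_singleton] at this
        omega
      · rintro x y ⟨-, a, b, rfl, -, hab⟩
        by_cases ha : a ∈ ({v} : Set V)
        · rw [collapse_of_mem ha]
          exact ⟨hGS u v huv, huv.ne⟩
        · rw [collapse_of_notMem ha]
          exact ⟨hGS a b hab, ha⟩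
      · omega

theorem exists_degree_le_three [Finite V] {G : SimpleGraph V}
    (hG : ¬ IsMinor (⊤ : SimpleGraph (Fin 4)) G) {p q : V} (hpq : G.Adj p q) :
    ∃ v w, G.Adj v w ∧ (G.neighborSet v).ncard ≤ 3 := by
  classical
  have := Fintype.ofFinite V
  by_contra! hbig
  let S : Finset V := Finset.univ.filter fun x => ∃ y, G.Adj x y
  have hmem : ∀ x y, G.Adj x y → x ∈ S := fun x y h => by simpa [S] using ⟨y, h⟩
  have hS2 : 2 ≤ S.card := by
    have : ({p, q} : Finset V) ⊆ S := by
      intro x hx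
      simp only [Finset.mem_insert, Finset.mem_singleton] at hx
      rcases hx with rfl | rfl
      · exact hmem _ _ hpq
      · exact hmem _ _ hpq.symm
    calc 2 = ({p, q} : Finset V).card := (Finset.card_pair hpq.ne).symm
      _ ≤ S.card := Finset.card_le_card this
  have hsum : 4 * S.card ≤ 2 * G.edgeSet.ncard := by
    rw [Set.ncard_eq_toFinset_card', ← SimpleGraph.edgeFinset,
      ← SimpleGraph.sum_degrees_eq_twice_card_edges]
    calc 4 * S.card = ∑ _x ∈ S, 4 := by rw [Finset.sum_const, smul_eq_mul, mul_comm]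
      _ ≤ ∑ x ∈ S, G.degree x := by
          refine Finset.sum_le_sum fun x hx => ?_
          obtain ⟨y, hy⟩ := (Finset.mem_filter.1 hx).2
          have := hbig x y hy
          rw [Set.ncard_eq_toFinset_card'] at this
          exact this
      _ ≤ ∑ x, G.degree x :=
          Finset.sum_le_sum_of_subset_of_nonneg (Finset.subset_univ S) fun _ _ _ => Nat.zero_le _
  exact hG (k4_of_dense S.card G S (Set.ncard_coe_finset S) hS2 (fun x y h => hmem x y h)
    (by omega))

/-! ### Colouring -/

/-- A 3-colouring of `G - v` using at most two colours around `v` extends to `v`. -/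
theorem colorable_of_extend [Finite V] {G : SimpleGraph V} (v : V) (c : V → Fin 3)
    (hc : ∀ x y, x ≠ v → y ≠ v → G.Adj x y → c x ≠ c y)
    (hN : (c '' G.neighborSet v).ncard ≤ 2) : G.Colorable 3 := by
  classical
  obtain ⟨k, hk⟩ : ∃ k, k ∉ c '' G.neighborSet v := by
    by_contra! hall
    rw [Set.eq_univ_of_forall hall, Set.ncard_univ, Nat.card_eq_fintype_card,
      Fintype.card_fin] at hN
    omega
  refine ⟨SimpleGraph.Coloring.mk (Function.update c v k) ?_⟩
  intro x y hxy
  by_cases hx : x = v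
  · subst hx
    rw [Function.update_self, Function.update_of_ne hxy.ne']
    exact fun h => hk ⟨y, hxy, h.symm⟩
  · by_cases hy : y = v
    · subst hy
      rw [Function.update_self, Function.update_of_ne hx]
      exact fun h => hk ⟨x, hxy.symm, h⟩
    · rw [Function.update_of_ne hx, Function.update_of_ne hy]
      exact hc x y hx hy hxy

theorem ncard_edgeSet_contract_lt [Finite V] {G : SimpleGraph V} {c a : V} {A : Set V}
    (hA : ∀ x ∈ A, G.Adj c x) (ha : a ∈ A) :
    (contract G c A).edgeSet.ncard < G.edgeSet.ncard := by
  have hsub : (contract G c A).edgeSet ⊆ Sym2.map (collapse c A) '' (G.edgeSet \ {s(c, a)}) := by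
    intro e he
    induction e with
    | _ x y =>
      obtain ⟨hne, p, q, rfl, rfl, hpq⟩ := he
      refine ⟨s(p, q), ⟨hpq, fun h => hne ?_⟩, rfl⟩
      have hc : collapse c A c = c := collapse_of_notMem fun h => (hA c h).ne rfl
      rcases Sym2.eq_iff.1 h with ⟨rfl, rfl⟩ | ⟨rfl, rfl⟩ <;> rw [hc, collapse_of_mem ha]
  calc (contract G c A).edgeSet.ncard
      ≤ (Sym2.map (collapse c A) '' (G.edgeSet \ {s(c, a)})).ncard :=
        Set.ncard_le_ncard hsub (Set.toFinite _)
    _ ≤ (G.edgeSet \ {s(c, a)}).ncard := Set.ncard_image_le (Set.toFinite _)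
    _ < G.edgeSet.ncard := Set.ncard_sdiff_singleton_lt_of_mem (hA a ha) (Set.toFinite _)

theorem colorable_three [Finite V] (n : ℕ) : ∀ G : SimpleGraph V, G.edgeSet.ncard = n →
    ¬ IsMinor (⊤ : SimpleGraph (Fin 4)) G → G.Colorable 3 := by
  induction n using Nat.strong_induction_on with
  | _ n ih =>
    intro G hn hG
    by_cases hempty : ∃ p q, G.Adj p q
    swap
    · push Not at hempty
      exact ⟨SimpleGraph.Coloring.mk (fun _ => 0) fun {x y} h => absurd h (hempty x y)⟩
    obtain ⟨p, q, hpq⟩ := hempty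
    obtain ⟨v, w, hvw, hdeg⟩ := exists_degree_le_three hG hpq
    by_cases hcl : ∃ a b, a ≠ b ∧ G.Adj v a ∧ G.Adj v b ∧ ¬ G.Adj a b
    · obtain ⟨a, b, hab, hva, hvb, hnab⟩ := hcl
      have hA : ∀ x ∈ ({a, b} : Set V), G.Adj v x := by
        rintro x (rfl | rfl) <;> assumption
      obtain ⟨c⟩ := ih _ (hn ▸ ncard_edgeSet_contract_lt hA (Or.inl rfl)) (contract G v {a, b}) rfl
        fun h => hG (h.trans (isMinor_contract hA))
      have hφa : collapse v {a, b} a = v := collapse_of_mem (Or.inl rfl)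
      have hφb : collapse v {a, b} b = v := collapse_of_mem (Or.inr rfl)
      refine colorable_of_extend v (fun x => c (collapse v {a, b} x)) ?_ ?_
      · intro x y hx hy hxy
        refine c.valid (contract_adj_of_adj ?_ hxy)
        by_cases hxA : x ∈ ({a, b} : Set V) <;> by_cases hyA : y ∈ ({a, b} : Set V)
        · exfalso
          rcases hxA with rfl | rfl <;> rcases hyA with rfl | rfl
          · exact hxy.ne rfl
          · exact hnab hxy
          · exact hnab hxy.symm
          · exact hxy.ne rfl
        · rw [collapse_of_mem hxA, collapse_of_notMem hyA]
          exact hy.symm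
        · rw [collapse_of_notMem hxA, collapse_of_mem hyA]
          exact hx
        · rw [collapse_of_notMem hxA, collapse_of_notMem hyA]
          exact hxy.ne
      · -- As `a` and `b` share a colour, `b` may be dropped from the neighbourhood.
        have hsub : (fun x => c (collapse v {a, b} x)) '' G.neighborSet v ⊆
            (fun x => c (collapse v {a, b} x)) '' (G.neighborSet v \ {b}) := by
          rintro _ ⟨x, hx, rfl⟩
          by_cases hxb : x = b
          · subst hxb
            exact ⟨a, ⟨hva, hab⟩, by simp only [hφa, hφb]⟩
          · exact ⟨x, ⟨hx, hxb⟩, rfl⟩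
        have c1 := Set.ncard_le_ncard hsub (Set.toFinite _)
        have c2 := Set.ncard_image_le (f := fun x => c (collapse v {a, b} x))
          (Set.toFinite (G.neighborSet v \ {b}))
        have c3 : (G.neighborSet v \ {b}).ncard < (G.neighborSet v).ncard :=
          Set.ncard_sdiff_singleton_lt_of_mem hvb (Set.toFinite _)
        omega
    · push Not at hcl
      have hdeg2 : (G.neighborSet v).ncard ≤ 2 := by
        by_contra! h3
        refine hG (k4_of_neighborhood hvw fun x hx => ?_)
        have c1 : 1 < (G.neighborSet v \ {x}).ncard := by
          rw [Set.ncard_sdiff_singleton_of_mem (show x ∈ G.neighborSet v from hx)]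
          omega
        obtain ⟨y, hy, z, hz, hyz⟩ := (Set.one_lt_ncard (Set.toFinite _)).1 c1
        exact ⟨y, z, hyz, hy.1, hz.1, hcl x y (fun h => hy.2 h.symm) hx hy.1,
          hcl x z (fun h => hz.2 h.symm) hx hz.1⟩
      let G' : SimpleGraph V := G.deleteIncidenceSet v
      have hle : G' ≤ G := G.deleteIncidenceSet_le v
      have hlt : G'.edgeSet.ncard < n := by
        rw [← hn]
        refine Set.ncard_lt_ncard (Set.ssubset_iff_of_subset
          (SimpleGraph.edgeSet_mono hle) |>.2 ⟨s(v, w), hvw, ?_⟩) (Set.toFinite _)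
        intro h
        have h' : G'.Adj v w := h
        simp [G', SimpleGraph.deleteIncidenceSet_adj] at h'
      obtain ⟨c⟩ := ih _ hlt G' rfl fun h => hG (h.trans (IsMinor.of_le hle))
      refine colorable_of_extend v c ?_ ((Set.ncard_image_le (Set.toFinite _)).trans hdeg2)
      intro x y hx hy hxy
      exact c.valid (SimpleGraph.deleteIncidenceSet_adj.2 ⟨hxy, hx, hy⟩)

end K4Free

theorem stmt15 {V : Type*} [Fintype V] (G : SimpleGraph V)
    (h : ¬ HasK4Minor G) : G.chromaticNumber ≤ 3 :=
  (K4Free.colorable_three _ G rfl fun hm => h (K4Free.hasK4Minor_of_isMinor hm)).chromaticNumber_le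
end
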